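/- Let 𝒢 be a group structure on {1,…,p} with positive weights (η_g) such that every index j ∈ {1,…,p} belongs to at least one group, let Ω(w) = Σ_{g∈𝒢} η_g ‖w_g‖_∞, and let λ > 0. Then the set { Σ_{g∈𝒢} ξ^g : ξ = (ξ^g)_{g∈𝒢} with ξ^g_j = 0 for j ∉ g and ‖ξ^g‖₁ ≤ λη_g for all g } is exactly the ball { κ ∈ ℝ^p : Ω*(κ) ≤ λ } of the dual norm Ω*(κ) = max_{Ω(z)≤1} z⊤κ. -/

import Mathlib

open Finset

/-- The ℓ∞-norm of the subvector of `w` indexed by the group `g`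
(equal to `max_{j ∈ g} |w j|` for nonempty `g`, and `0` for empty `g`). -/
noncomputable def gsup {p : ℕ} (g : Finset (Fin p)) (w : Fin p → ℝ) : ℝ :=
  ↑(g.sup fun j => Real.nnabs (w j))

/-- The structured norm `Ω(w) = ∑_{g ∈ 𝒢} η_g ‖w_g‖_∞`. -/
noncomputable def Omega {p : ℕ} (G : Finset (Finset (Fin p)))
    (η : Finset (Fin p) → ℝ) (w : Fin p → ℝ) : ℝ :=
  ∑ g ∈ G, η g * gsup g w

/-- ℓ₁-norm of a vector. -/
def l1 {p : ℕ} (v : Fin p → ℝ) : ℝ := ∑ j, |v j|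

/-- A family `ξ = (ξ^g)_{g ∈ 𝒢}` is dual-feasible at level `lam` if `ξ^g_j = 0` for
`j ∉ g` and `‖ξ^g‖₁ ≤ lam * η_g` for every `g ∈ 𝒢`. -/
def DualFeasible {p : ℕ} (G : Finset (Finset (Fin p))) (η : Finset (Fin p) → ℝ)
    (lam : ℝ) (ξ : Finset (Fin p) → Fin p → ℝ) : Prop :=
  ∀ g ∈ G, (∀ j, j ∉ g → ξ g j = 0) ∧ l1 (ξ g) ≤ lam * η g

/-- Primal (proximal) objective `½‖u − w‖₂² + λ Ω(w)`. -/
noncomputable def proxObj {p : ℕ} (G : Finset (Finset (Fin p)))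
    (η : Finset (Fin p) → ℝ) (lam : ℝ) (u w : Fin p → ℝ) : ℝ :=
  (1/2) * ∑ j, (u j - w j)^2 + lam * Omega G η w

/-- Dual objective `½‖u − ∑_{g} ξ^g‖₂²`. -/
noncomputable def dualObj {p : ℕ} (G : Finset (Finset (Fin p))) (u : Fin p → ℝ)
    (ξ : Finset (Fin p) → Fin p → ℝ) : ℝ :=
  (1/2) * ∑ j, (u j - ∑ g ∈ G, ξ g j)^2

/-- The dual norm `Ω*(κ) = max_{Ω(z) ≤ 1} z⊤κ`. -/
noncomputable def dualNorm {p : ℕ} (G : Finset (Finset (Fin p)))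
    (η : Finset (Fin p) → ℝ) (κ : Fin p → ℝ) : ℝ :=
  sSup {t : ℝ | ∃ z : Fin p → ℝ, Omega G η z ≤ 1 ∧ t = ∑ j, z j * κ j}

lemma gsup_ge {p : ℕ} (g : Finset (Fin p)) (w : Fin p → ℝ) (j : Fin p) (hj : j ∈ g) :
    |w j| ≤ gsup g w := by
  unfold gsup
  have h : Real.nnabs (w j) ≤ g.sup fun j => Real.nnabs (w j) :=
    Finset.le_sup (f := fun j => Real.nnabs (w j)) hj
  have h2 := NNReal.coe_le_coe.mpr h
  simpa using h2

lemma gsup_nonneg {p : ℕ} (g : Finset (Fin p)) (w : Fin p → ℝ) : 0 ≤ gsup g w :=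
  NNReal.coe_nonneg _

lemma gsup_attained {p : ℕ} (g : Finset (Fin p)) (hg : g.Nonempty) (w : Fin p → ℝ) :
    ∃ j ∈ g, gsup g w = |w j| := by
  obtain ⟨j, hj, h⟩ := Finset.exists_mem_eq_sup g hg (fun j => Real.nnabs (w j))
  refine ⟨j, hj, ?_⟩
  unfold gsup
  rw [h]
  simp

lemma gsup_smul {p : ℕ} (g : Finset (Fin p)) (hg : g.Nonempty) (c : ℝ) (hc : 0 ≤ c)
    (w : Fin p → ℝ) : gsup g (fun j => c * w j) ≤ c * gsup g w := by
  obtain ⟨j, hj, h⟩ := gsup_attained g hg (fun j => c * w j)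
  rw [h, abs_mul, abs_of_nonneg hc]
  exact mul_le_mul_of_nonneg_left (gsup_ge g w j hj) hc

lemma Omega_term {p : ℕ} (G : Finset (Finset (Fin p))) (η : Finset (Fin p) → ℝ)
    (hη : ∀ g ∈ G, 0 < η g) (z : Fin p → ℝ) (g : Finset (Fin p)) (hg : g ∈ G)
    (j : Fin p) (hj : j ∈ g) : η g * |z j| ≤ Omega G η z := by
  refine le_trans (mul_le_mul_of_nonneg_left (gsup_ge g z j hj) (hη g hg).le) ?_
  exact Finset.single_le_sum (f := fun g => η g * gsup g z)
    (fun i hi => mul_nonneg (hη i hi).le (gsup_nonneg _ _)) hg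

lemma feas_pair {p : ℕ} (G : Finset (Finset (Fin p))) (η : Finset (Fin p) → ℝ)
    (lam : ℝ) (ξ : Finset (Fin p) → Fin p → ℝ) (h : DualFeasible G η lam ξ)
    (z : Fin p → ℝ) : ∑ j, z j * ∑ g ∈ G, ξ g j ≤ lam * Omega G η z := by
  have : ∑ j, z j * ∑ g ∈ G, ξ g j = ∑ g ∈ G, ∑ j, z j * ξ g j := by
    simp_rw [Finset.mul_sum]
    rw [Finset.sum_comm]
  rw [this, Omega, Finset.mul_sum]
  refine Finset.sum_le_sum fun g hg => ?_
  obtain ⟨h0, h1⟩ := h g hg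
  calc ∑ j, z j * ξ g j ≤ ∑ j, gsup g z * |ξ g j| := by
        refine Finset.sum_le_sum fun j _ => ?_
        by_cases hj : j ∈ g
        · refine (le_abs_self _).trans ?_
          rw [abs_mul]
          exact mul_le_mul_of_nonneg_right (gsup_ge g z j hj) (abs_nonneg _)
        · simp [h0 j hj]
    _ = gsup g z * l1 (ξ g) := by rw [l1, Finset.mul_sum]
    _ ≤ gsup g z * (lam * η g) := mul_le_mul_of_nonneg_left h1 (gsup_nonneg _ _)
    _ = lam * (η g * gsup g z) := by ring

lemma dual_bdd {p : ℕ} (G : Finset (Finset (Fin p))) (η : Finset (Fin p) → ℝ)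
    (hη : ∀ g ∈ G, 0 < η g) (hcover : ∀ j : Fin p, ∃ g ∈ G, j ∈ g) (κ : Fin p → ℝ) :
    BddAbove {t : ℝ | ∃ z : Fin p → ℝ, Omega G η z ≤ 1 ∧ t = ∑ j, z j * κ j} := by
  choose γ hγ hγ2 using hcover
  refine ⟨∑ j, (1 / η (γ j)) * |κ j|, ?_⟩
  rintro t ⟨z, hz, rfl⟩
  refine Finset.sum_le_sum fun j _ => (le_abs_self _).trans ?_
  rw [abs_mul]
  refine mul_le_mul_of_nonneg_right ?_ (abs_nonneg _)
  rw [le_div_iff₀ (hη _ (hγ j)), mul_comm]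
  exact (Omega_term G η hη z _ (hγ j) j (hγ2 j)).trans hz

/-- Feasible block for the group `g`. -/
def blockSet {p : ℕ} (g : Finset (Fin p)) (c : ℝ) : Set (Fin p → ℝ) :=
  {v | (∀ j, j ∉ g → v j = 0) ∧ l1 v ≤ c}

lemma blockSet_compact {p : ℕ} (g : Finset (Fin p)) (c : ℝ) : IsCompact (blockSet g c) := by
  refine Metric.isCompact_of_isClosed_isBounded ?_ ?_
  · have h1 : IsClosed {v : Fin p → ℝ | ∀ j, j ∉ g → v j = 0} := by
      simp only [Set.setOf_forall]
      exact isClosed_iInter fun j => isClosed_iInter fun _ =>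
        isClosed_eq (continuous_apply j) continuous_const
    have h2 : IsClosed {v : Fin p → ℝ | l1 v ≤ c} := by
      refine isClosed_le ?_ continuous_const
      unfold l1
      fun_prop
    exact h1.inter h2
  · refine (Metric.isBounded_closedBall (x := (0 : Fin p → ℝ)) (r := c)).subset ?_
    rintro v ⟨_, hv⟩
    have hc : 0 ≤ c := le_trans (Finset.sum_nonneg fun j _ => abs_nonneg (v j)) hv
    rw [mem_closedBall_zero_iff, pi_norm_le_iff_of_nonneg hc]
    intro j
    refine le_trans ?_ hv
    exact Finset.single_le_sum (f := fun j => |v j|) (fun i _ => abs_nonneg _)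
      (Finset.mem_univ j)

lemma blockSet_convex {p : ℕ} (g : Finset (Fin p)) (c : ℝ) : Convex ℝ (blockSet g c) := by
  rintro x ⟨hx0, hx⟩ y ⟨hy0, hy⟩ a b ha hb hab
  refine ⟨fun j hj => by simp [hx0 j hj, hy0 j hj], ?_⟩
  have h : l1 (a • x + b • y) ≤ a * l1 x + b * l1 y := by
    unfold l1
    rw [Finset.mul_sum, Finset.mul_sum, ← Finset.sum_add_distrib]
    refine Finset.sum_le_sum fun j _ => ?_
    simp only [Pi.add_apply, Pi.smul_apply, smul_eq_mul]
    refine (abs_add_le _ _).trans ?_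
    rw [abs_mul, abs_mul, abs_of_nonneg ha, abs_of_nonneg hb]
  calc _ ≤ a * l1 x + b * l1 y := h
    _ ≤ a * c + b * c := by gcongr
    _ = c := by rw [← add_mul, hab, one_mul]

/-- Sum over the groups, as a linear map. -/
noncomputable def sumMap {p : ℕ} (G : Finset (Finset (Fin p))) :
    (Finset (Fin p) → Fin p → ℝ) →ₗ[ℝ] (Fin p → ℝ) :=
  ∑ g ∈ G, LinearMap.proj g

lemma sumMap_apply {p : ℕ} (G : Finset (Finset (Fin p))) (ξ : Finset (Fin p) → Fin p → ℝ) :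
    sumMap G ξ = fun j => ∑ g ∈ G, ξ g j := by
  ext j
  simp [sumMap]

open Classical in
lemma feas_of_not_lt {p : ℕ} (G : Finset (Finset (Fin p))) (η : Finset (Fin p) → ℝ)
    (hne : ∀ g ∈ G, g.Nonempty) (hη : ∀ g ∈ G, 0 < η g)
    (lam : ℝ) (hlam : 0 < lam) (κ : Fin p → ℝ)
    (hκ : ∀ z : Fin p → ℝ, ∑ j, z j * κ j ≤ lam * Omega G η z) :
    ∃ ξ : Finset (Fin p) → Fin p → ℝ,
        DualFeasible G η lam ξ ∧ κ = fun j => ∑ g ∈ G, ξ g j := by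
  let S : Set (Finset (Fin p) → Fin p → ℝ) :=
    Set.pi Set.univ fun g => blockSet g (if g ∈ G then lam * η g else 0)
  have hSc : IsCompact S := isCompact_univ_pi fun g => blockSet_compact _ _
  have hSv : Convex ℝ S := convex_pi fun g _ => blockSet_convex _ _
  have hS : ∀ ξ ∈ S, DualFeasible G η lam ξ := by
    intro ξ hξ g hg
    have := hξ g (Set.mem_univ g)
    simp only [hg, if_true] at this
    exact this
  let K := sumMap G '' S
  have hKc : IsCompact K := hSc.image (LinearMap.continuous_of_finiteDimensional _)
  have hKv : Convex ℝ K := hSv.linear_image _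
  by_cases hmem : κ ∈ K
  · obtain ⟨ξ, hξ, rfl⟩ := hmem
    exact ⟨ξ, hS ξ hξ, sumMap_apply G ξ⟩
  exfalso
  obtain ⟨f, u, hfu, huκ⟩ := geometric_hahn_banach_closed_point hKv hKc.isClosed hmem
  let z : Fin p → ℝ := fun j => f (Pi.single j 1)
  have hf : ∀ x : Fin p → ℝ, f x = ∑ j, z j * x j := by
    intro x
    conv_lhs => rw [pi_eq_sum_univ' x]
    simp [z, mul_comm, Pi.single_apply, map_sum]
  have hj : ∀ g : Finset (Fin p), ∃ v : Fin p → ℝ, v ∈ blockSet g (if g ∈ G then lam * η g else 0)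
      ∧ (g ∈ G → ∑ j, z j * v j = lam * (η g * gsup g z)) := by
    intro g
    by_cases hg : g ∈ G
    · obtain ⟨j, hj, hjz⟩ := gsup_attained g (hne g hg) z
      have hpos : 0 ≤ lam * η g := mul_nonneg hlam.le (hη g hg).le
      refine ⟨Pi.single j (lam * η g * SignType.sign (z j)), ⟨?_, ?_⟩, ?_⟩
      · intro i hi
        rw [Pi.single_eq_of_ne]
        rintro rfl
        exact hi hj
      · simp only [hg, if_true, l1]
        rw [Finset.sum_eq_single j (fun i _ hi => by simp [Pi.single_eq_of_ne hi]) (by simp)]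
        rw [Pi.single_eq_same, abs_mul, abs_of_nonneg hpos]
        refine mul_le_of_le_one_right hpos ?_
        rcases lt_trichotomy (z j) 0 with h | h | h <;> simp [h]
      · intro _
        rw [Finset.sum_eq_single j (fun i _ hi => by simp [Pi.single_eq_of_ne hi]) (by simp)]
        rw [Pi.single_eq_same, hjz]
        have := self_mul_sign (z j)
        rw [← this]; ring
    · exact ⟨0, ⟨by simp, by simp [hg, l1]⟩, fun h => absurd h hg⟩
  choose ξ hξ hξ2 using hj
  have h1 := hfu (sumMap G ξ) ⟨ξ, fun g _ => hξ g, rfl⟩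
  rw [sumMap_apply, hf] at h1
  have h2 : ∑ j, z j * ∑ g ∈ G, ξ g j = lam * Omega G η z := by
    simp_rw [Finset.mul_sum]
    rw [Finset.sum_comm, Omega, Finset.mul_sum]
    exact Finset.sum_congr rfl fun g hg => hξ2 g hg
  rw [h2] at h1
  rw [hf] at huκ
  linarith [hκ z]

/-- the set of sums `∑_g ξ^g` over dual-feasible families at level `λ`
is exactly the dual-norm ball of radius `λ`. -/
theorem stmt3 {p : ℕ} (G : Finset (Finset (Fin p))) (η : Finset (Fin p) → ℝ)
    (hne : ∀ g ∈ G, g.Nonempty) (hη : ∀ g ∈ G, 0 < η g)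
    (hcover : ∀ j : Fin p, ∃ g ∈ G, j ∈ g)
    (lam : ℝ) (hlam : 0 < lam) :
    {κ : Fin p → ℝ | ∃ ξ : Finset (Fin p) → Fin p → ℝ,
        DualFeasible G η lam ξ ∧ κ = fun j => ∑ g ∈ G, ξ g j}
      = {κ : Fin p → ℝ | dualNorm G η κ ≤ lam} := by
  ext κ
  simp only [Set.mem_setOf_eq]
  constructor
  · rintro ⟨ξ, hξ, rfl⟩
    refine Real.sSup_le ?_ hlam.le
    rintro t ⟨z, hz, rfl⟩
    refine (feas_pair G η lam ξ hξ z).trans ?_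
    exact mul_le_of_le_one_right hlam.le hz
  · intro hκ
    refine feas_of_not_lt G η hne hη lam hlam κ fun z => ?_
    have hbdd := dual_bdd G η hη hcover κ
    have hΩ : 0 ≤ Omega G η z :=
      Finset.sum_nonneg fun g hg => mul_nonneg (hη g hg).le (gsup_nonneg _ _)
    rcases hΩ.eq_or_lt with h0 | hpos
    · have hz : ∀ j, z j = 0 := by
        intro j
        obtain ⟨g, hg, hj⟩ := hcover j
        have h := Omega_term G η hη z g hg j hj
        rw [← h0] at h
        have h3 : |z j| ≤ 0 := by
          by_contra hc
          push Not at hc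
          exact absurd h (not_le.mpr (mul_pos (hη g hg) hc))
        exact abs_nonpos_iff.mp h3
      rw [← h0]
      simp [hz]
    · set c := Omega G η z with hc
      have hle : Omega G η (fun j => c⁻¹ * z j) ≤ 1 := by
        calc Omega G η (fun j => c⁻¹ * z j) ≤ c⁻¹ * c := by
              conv_rhs => rw [hc]
              rw [← hc]
              conv_rhs => rw [hc, Omega, Finset.mul_sum]
              rw [Omega]
              refine Finset.sum_le_sum fun g hg => ?_
              have := mul_le_mul_of_nonneg_left
                (gsup_smul g (hne g hg) c⁻¹ (inv_nonneg.mpr hpos.le) z) (hη g hg).le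
              refine this.trans (le_of_eq ?_)
              simp only [hc, Omega]
              ring
          _ = 1 := inv_mul_cancel₀ hpos.ne'
      have h1 : ∑ j, (c⁻¹ * z j) * κ j ≤ lam :=
        (le_csSup hbdd ⟨_, hle, rfl⟩).trans hκ
      have h2 : ∑ j, (c⁻¹ * z j) * κ j = c⁻¹ * ∑ j, z j * κ j := by
        rw [Finset.mul_sum]
        exact Finset.sum_congr rfl fun j _ => by ring
      rw [h2, inv_mul_le_iff₀ hpos] at h1
      linarith
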